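/- Let G be a finite bipartite simple graph with at least one vertex. Then the geometric realization of the independence complex I(G) is either a connected topological space or is homotopy equivalent to S^0, the two-point unit sphere in ℝ. -/

import Mathlib

/-!
Let `A`, `B` be the two parts of the bipartition. Any two vertices in the same part are
nonadjacent, so `I(G)` is made of the full simplices on `A` and on `B`, plus possibly faces
meeting both.

If `A` or `B` is empty, or if some `a ∈ A` and `b ∈ B` are nonadjacent, then any two vertices are
joined by a chain of edges of `I(G)`, hence the realization is path connected
(`isPathConnected_of_joinedIn`).

Otherwise `G` is complete bipartite with both parts nonempty, and the realization is the union of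
the two simplices on `A` and `B` (`geomReal_eq_union`). These are disjoint convex sets, separated
by the linear functional `sideForm` with values `1` and `-1` on them; this functional is a homotopy
equivalence to `S^0`, with inverse picking one vertex in each part, through the straight-line
homotopy.
-/


/-- The independence complex of a simple graph `G`: its faces are the finsets of vertices no
two of which are adjacent. -/
def indepComplex {V : Type*} (G : SimpleGraph V) : Set (Finset V) :=
  {s | ∀ u ∈ s, ∀ v ∈ s, ¬ G.Adj u v}

/-- The geometric realization of an abstract simplicial complex `K` on the vertex set `V`,
as the subspace `⋃ s ∈ K, convexHull ℝ {e_v : v ∈ s}` of the Euclidean space `ℝ^V`, where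
`e_v` denotes the standard basis vector indexed by `v`. -/
def geomReal {V : Type*} [DecidableEq V] (K : Set (Finset V)) :
    Set (EuclideanSpace ℝ V) :=
  ⋃ s ∈ K, convexHull ℝ ((fun v => EuclideanSpace.single v (1 : ℝ)) '' (s : Set V))

/-- The simplex spanned by the basis vectors `e_v`, `v ∈ S`. -/
def spanSimplex {V : Type*} [DecidableEq V] (S : Set V) : Set (EuclideanSpace ℝ V) :=
  convexHull ℝ ((fun v => EuclideanSpace.single v (1 : ℝ)) '' S)

lemma single_mem_spanSimplex {V : Type*} [DecidableEq V] {S : Set V} {v : V} (hv : v ∈ S) :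
    EuclideanSpace.single v (1 : ℝ) ∈ spanSimplex S :=
  subset_convexHull ℝ _ ⟨v, hv, rfl⟩

lemma spanSimplex_mono {V : Type*} [DecidableEq V] {S T : Set V} (h : S ⊆ T) :
    spanSimplex S ⊆ spanSimplex T :=
  convexHull_mono (Set.image_mono h)

lemma mem_geomReal {V : Type*} [DecidableEq V] {K : Set (Finset V)} {x : EuclideanSpace ℝ V} :
    x ∈ geomReal K ↔ ∃ s ∈ K, x ∈ spanSimplex (s : Set V) := by
  simp [geomReal, spanSimplex]

/-- Every point of a realization is joined to a vertex of a face containing it, so it suffices to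
join the vertices. -/
lemma isPathConnected_of_joinedIn {V : Type*} [Fintype V] [DecidableEq V] [Nonempty V]
    {K : Set (Finset V)}
    (h : ∀ u v : V, JoinedIn (geomReal K) (EuclideanSpace.single u (1 : ℝ))
      (EuclideanSpace.single v (1 : ℝ))) : IsPathConnected (geomReal K) := by
  obtain ⟨w⟩ := ‹Nonempty V›
  refine ⟨EuclideanSpace.single w 1, (h w w).source_mem, fun {x} hx => ?_⟩
  obtain ⟨s, hs, hxs⟩ := mem_geomReal.1 hx
  obtain ⟨_, v, hv, rfl⟩ := convexHull_nonempty_iff.1 ⟨x, hxs⟩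
  refine (h w v).trans (JoinedIn.of_segment_subset fun y hy => mem_geomReal.2 ⟨s, hs, ?_⟩)
  exact (convex_convexHull ℝ _).segment_subset (single_mem_spanSimplex hv) hxs hy

lemma joinedIn_of_not_adj {V : Type*} [Fintype V] [DecidableEq V] (G : SimpleGraph V)
    {u v : V} (h : ¬ G.Adj u v) : JoinedIn (geomReal (indepComplex G)) (EuclideanSpace.single u (1 : ℝ))
      (EuclideanSpace.single v (1 : ℝ)) := by
  have h' : ¬ G.Adj v u := fun e => h e.symm
  refine JoinedIn.of_segment_subset fun y hy => mem_geomReal.2 ⟨{u, v}, ?_, ?_⟩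
  · simp [indepComplex, h, h']
  · exact (convex_convexHull ℝ _).segment_subset (single_mem_spanSimplex (by simp))
      (single_mem_spanSimplex (by simp)) hy

/-- For a complete bipartite graph, no face meets both parts. -/
lemma geomReal_eq_union {V : Type*} [Fintype V] [DecidableEq V] (G : SimpleGraph V) (A : Set V)
    (hA : ∀ u v : V, G.Adj u v → (u ∈ A ↔ v ∉ A)) (hc : ∀ a ∈ A, ∀ b ∉ A, G.Adj a b) :
    geomReal (indepComplex G) = spanSimplex A ∪ spanSimplex Aᶜ := by
  classical
  ext x
  rw [mem_geomReal]
  constructor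
  · rintro ⟨s, hs, hx⟩
    by_cases hsA : (s : Set V) ⊆ Aᶜ
    · exact Or.inr (spanSimplex_mono hsA hx)
    · obtain ⟨a, has, haA⟩ := Set.not_subset.1 hsA
      refine Or.inl (spanSimplex_mono (fun v hv => ?_) hx)
      by_contra hvA
      exact hs a has v hv (hc a (not_not.1 haA) v hvA)
  · rintro (hx | hx)
    · refine ⟨A.toFinset, fun u hu v hv e => ?_, by simpa using hx⟩
      rw [Set.mem_toFinset] at hu hv
      exact (hA u v e).1 hu hv
    · refine ⟨(Aᶜ).toFinset, fun u hu v hv e => ?_, by simpa using hx⟩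
      rw [Set.mem_toFinset] at hu hv
      exact hu ((hA u v e).2 hv)

open Classical in
/-- The linear functional on `ℝ^V` with value `1` on the `e_v` with `v ∈ A` and `-1` on the
others. -/
noncomputable def sideForm {V : Type*} [Fintype V] (A : Set V) : EuclideanSpace ℝ V →L[ℝ] ℝ :=
  ∑ v, (if v ∈ A then (1 : ℝ) else -1) • EuclideanSpace.proj v

open Classical in
lemma sideForm_single {V : Type*} [Fintype V] [DecidableEq V] (A : Set V) (v : V) :
    sideForm A (EuclideanSpace.single v (1 : ℝ)) = if v ∈ A then (1 : ℝ) else -1 := by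
  have h : ∀ x, sideForm A x = ∑ u, (if u ∈ A then (1 : ℝ) else -1) * x u := fun x => by
    simp only [sideForm, sum_apply, smul_apply]
    rfl
  rw [h]
  simp

lemma sideForm_of_mem_spanSimplex {V : Type*} [Fintype V] [DecidableEq V] (A S : Set V) (c : ℝ)
    (h : ∀ v ∈ S, sideForm A (EuclideanSpace.single v (1 : ℝ)) = c)
    {x : EuclideanSpace ℝ V} (hx : x ∈ spanSimplex S) : sideForm A x = c := by
  have hconv : Convex ℝ {x | sideForm A x = c} :=
    convex_hyperplane (sideForm A).isLinear c
  exact convexHull_min (by rintro _ ⟨v, hv, rfl⟩; exact h v hv) hconv hx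

/-- A space covered by two nonempty convex sets, on which a continuous linear functional takes the values
`1` and `-1` respectively, deformation retracts onto a pair of points, one in each set. -/
lemma nonempty_homotopyEquiv_sphere {E : Type*} [NormedAddCommGroup E] [NormedSpace ℝ E]
    {P Q : Set E} (hP : Convex ℝ P) (hQ : Convex ℝ Q) (L : E →L[ℝ] ℝ)
    (hLP : ∀ x ∈ P, L x = 1) (hLQ : ∀ x ∈ Q, L x = -1) {p q : E} (hp : p ∈ P) (hq : q ∈ Q) :
    Nonempty (ContinuousMap.HomotopyEquiv ↥(P ∪ Q) ↥(Metric.sphere (0 : ℝ) 1)) := by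
  -- the affine map `ℝ → E` sending `1` to `p` and `-1` to `q`
  let r : ℝ → E := fun y => ((1 + y) / 2) • p + ((1 - y) / 2) • q
  have r1 : r 1 = p := by simp only [r]; norm_num
  have r2 : r (-1) = q := by simp only [r]; norm_num
  have hr : Continuous r := by fun_prop
  have hf : ∀ x : ↥(P ∪ Q), L x ∈ Metric.sphere (0 : ℝ) 1 := by
    rintro ⟨x, hx | hx⟩
    · simp [hLP x hx]
    · simp [hLQ x hx]
  have hy : ∀ y : ↥(Metric.sphere (0 : ℝ) 1), (y : ℝ) = 1 ∨ (y : ℝ) = -1 := by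
    rintro ⟨y, hy⟩
    rw [mem_sphere_zero_iff_norm, Real.norm_eq_abs] at hy
    exact eq_or_eq_neg_of_abs_eq hy
  have hg : ∀ y : ↥(Metric.sphere (0 : ℝ) 1), r y ∈ P ∪ Q := by
    intro y
    rcases hy y with h | h
    · rw [h, r1]; exact Or.inl hp
    · rw [h, r2]; exact Or.inr hq
  have hH : ∀ z : unitInterval × ↥(P ∪ Q),
      (1 - (z.1 : ℝ)) • r (L z.2) + (z.1 : ℝ) • (z.2 : E) ∈ P ∪ Q := by
    rintro ⟨t, x, hx | hx⟩
    · left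
      simp only [hLP x hx, r1]
      exact hP hp hx (sub_nonneg.2 t.2.2) t.2.1 (by ring)
    · right
      simp only [hLQ x hx, r2]
      exact hQ hq hx (sub_nonneg.2 t.2.2) t.2.1 (by ring)
  let f : C(↥(P ∪ Q), ↥(Metric.sphere (0 : ℝ) 1)) := ⟨fun x => ⟨L x, hf x⟩, by fun_prop⟩
  let g : C(↥(Metric.sphere (0 : ℝ) 1), ↥(P ∪ Q)) := ⟨fun y => ⟨r y, hg y⟩, by fun_prop⟩
  have hfg : f.comp g = ContinuousMap.id _ := by
    ext y
    change L (r y) = y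
    rcases hy y with h | h
    · rw [h, r1, hLP p hp]
    · rw [h, r2, hLQ q hq]
  refine ⟨⟨f, g, ⟨⟨⟨fun z => ⟨_, hH z⟩, by fun_prop⟩, ?_, ?_⟩⟩, ?_⟩⟩
  · intro x
    apply Subtype.ext
    simp [f, g]
  · intro x
    apply Subtype.ext
    simp
  · rw [hfg]

/-- The geometric realization of the independence complex of a finite bipartite simple graph
with at least one vertex is either connected or homotopy equivalent to `S^0`, the two-point
unit sphere in `ℝ`. -/
theorem statement8 {V : Type*} [Fintype V] [DecidableEq V] [Nonempty V]
    (G : SimpleGraph V)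
    (hbip : ∃ A : Set V, ∀ u v : V, G.Adj u v → (u ∈ A ↔ v ∉ A)) :
    ConnectedSpace ↥(geomReal (indepComplex G)) ∨
    Nonempty (ContinuousMap.HomotopyEquiv
      ↥(geomReal (indepComplex G)) ↥(Metric.sphere (0 : ℝ) 1)) := by
  obtain ⟨A, hA⟩ := hbip
  have same : ∀ u v : V, (u ∈ A ↔ v ∈ A) → ¬ G.Adj u v := by
    intro u v h e
    have := hA u v e
    tauto
  by_cases hc : (∃ a ∈ A, ∃ b ∉ A, ¬ G.Adj a b) ∨ (∀ v, v ∈ A) ∨ (∀ v, v ∉ A)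
  · left
    refine isConnected_iff_connectedSpace.1
      (isPathConnected_of_joinedIn fun u v => ?_).isConnected
    rcases hc with ⟨a, ha, b, hb, hab⟩ | h | h
    · have key : ∀ w, JoinedIn (geomReal (indepComplex G)) (EuclideanSpace.single w (1 : ℝ))
          (EuclideanSpace.single a (1 : ℝ)) := by
        intro w
        by_cases hw : w ∈ A
        · exact joinedIn_of_not_adj G (same w a (by tauto))
        · exact (joinedIn_of_not_adj G (same w b (by tauto))).trans
            (joinedIn_of_not_adj G hab).symm
      exact (key u).trans (key v).symm
    · exact joinedIn_of_not_adj G (same u v (by simp [h]))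
    · exact joinedIn_of_not_adj G (same u v (by simp [h]))
  · right
    push Not at hc
    obtain ⟨hadj, ⟨b, hb⟩, a, ha⟩ := hc
    rw [geomReal_eq_union G A hA hadj]
    refine nonempty_homotopyEquiv_sphere (convex_convexHull ℝ _) (convex_convexHull ℝ _)
      (sideForm A)
      (fun x hx => sideForm_of_mem_spanSimplex A A 1 (fun v hv => ?_) hx)
      (fun x hx => sideForm_of_mem_spanSimplex A Aᶜ (-1) (fun v hv => ?_) hx)
      (single_mem_spanSimplex ha) (single_mem_spanSimplex (S := Aᶜ) hb)
    · rw [sideForm_single, if_pos hv]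
    · rw [sideForm_single, if_neg hv]
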